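/- For all real θ₁, θ₂ with |4cos 2θ₂ + 8cos 3θ₁ cos θ₂ − 3| < 9, the point (X₁, X₂) = (12 sin 3θ₁ cos θ₂, 4 sin 2θ₂ + 4 cos 3θ₁ sin θ₂)/√(81 − (4cos 2θ₂ + 8cos 3θ₁ cos θ₂ − 3)²) satisfies X₁² + 3X₂² ≤ 2. -/

import Mathlib

lemma hex_aux_pos (a c : ℝ) (ha1 : -1 ≤ a) (ha2 : a ≤ 1) (hc0 : 0 ≤ c) (hc2 : c ≤ 1)
    (h : 3 ≤ 4 * c ^ 2) :
    0 ≤ 4 - 7*c^2 + 2*a*c - 3*a^2 + 4*c^4 - 4*a*c^3 + 4*a^2*c^2 := by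
  have h1 : 0 ≤ (1 - c) * (3 + 2*c - 2*c^2) :=
    mul_nonneg (by linarith) (by nlinarith)
  have h2 : 0 ≤ (4*c^2 - 3) * (1 - a) := mul_nonneg (by linarith) (by linarith)
  have h3 : 0 ≤ (1 - a) * (2 * ((1 - c) * (3 + 2*c - 2*c^2)) + (4*c^2 - 3) * (1 - a)) :=
    mul_nonneg (by linarith) (by linarith)
  nlinarith [sq_nonneg ((c-1)*(2*c+1))]

lemma hex_aux (a c : ℝ) (ha1 : -1 ≤ a) (ha2 : a ≤ 1) (hc1 : -1 ≤ c) (hc2 : c ≤ 1) :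
    0 ≤ 4 - 7*c^2 + 2*a*c - 3*a^2 + 4*c^4 - 4*a*c^3 + 4*a^2*c^2 := by
  rcases le_total (4 * c ^ 2) 3 with h | h
  · have h1 : 0 ≤ (1 + a) * ((c-1)*(2*c+1))^2 := mul_nonneg (by linarith) (sq_nonneg _)
    have h2 : 0 ≤ (1 - a) * ((c+1)*(2*c-1))^2 := mul_nonneg (by linarith) (sq_nonneg _)
    have h3 : 0 ≤ ((1 - a) * (1 + a)) * (3 - 4*c^2) :=
      mul_nonneg (mul_nonneg (by linarith) (by linarith)) (by linarith)
    linarith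
  · rcases le_total 0 c with h0 | h0
    · exact hex_aux_pos a c ha1 ha2 h0 hc2 h
    · have := hex_aux_pos (-a) (-c) (by linarith) (by linarith) (by linarith) (by linarith)
        (by linarith)
      linarith

/-- The parameterization of the region of polynomial decay of the hexagonal quantum
walk lies within the ellipse `X₁² + 3X₂² ≤ 2`. -/
theorem hexagonal_decay_region_in_ellipse (θ₁ θ₂ : ℝ)
    (h : |4 * Real.cos (2 * θ₂) + 8 * Real.cos (3 * θ₁) * Real.cos θ₂ - 3| < 9) :
    let D := Real.sqrt (81 -
      (4 * Real.cos (2 * θ₂) + 8 * Real.cos (3 * θ₁) * Real.cos θ₂ - 3) ^ 2)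
    let X₁ := 12 * Real.sin (3 * θ₁) * Real.cos θ₂ / D
    let X₂ := (4 * Real.sin (2 * θ₂) + 4 * Real.cos (3 * θ₁) * Real.sin θ₂) / D
    X₁ ^ 2 + 3 * X₂ ^ 2 ≤ 2 := by
  intro D X₁ X₂
  have hD : 0 < 81 -
      (4 * Real.cos (2 * θ₂) + 8 * Real.cos (3 * θ₁) * Real.cos θ₂ - 3) ^ 2 := by
    have := abs_lt.mp h
    nlinarith
  have hD2 : D ^ 2 = 81 -
      (4 * Real.cos (2 * θ₂) + 8 * Real.cos (3 * θ₁) * Real.cos θ₂ - 3) ^ 2 :=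
    Real.sq_sqrt hD.le
  have key := hex_aux (Real.cos (3 * θ₁)) (Real.cos θ₂) (Real.neg_one_le_cos _)
    (Real.cos_le_one _) (Real.neg_one_le_cos _) (Real.cos_le_one _)
  have e : X₁ ^ 2 + 3 * X₂ ^ 2 = ((12 * Real.sin (3 * θ₁) * Real.cos θ₂) ^ 2 +
      3 * (4 * Real.sin (2 * θ₂) + 4 * Real.cos (3 * θ₁) * Real.sin θ₂) ^ 2) / D ^ 2 := by
    simp only [X₁, X₂]
    ring
  rw [e, hD2, div_le_iff₀ hD, Real.sin_two_mul, Real.cos_two_mul]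
  have e2 : (12 * Real.sin (3 * θ₁) * Real.cos θ₂) ^ 2 +
      3 * (4 * (2 * Real.sin θ₂ * Real.cos θ₂) + 4 * Real.cos (3 * θ₁) * Real.sin θ₂) ^ 2
      = 144 * Real.sin (3 * θ₁) ^ 2 * Real.cos θ₂ ^ 2
        + 48 * Real.sin θ₂ ^ 2 * (2 * Real.cos θ₂ + Real.cos (3 * θ₁)) ^ 2 := by ring
  rw [e2, Real.sin_sq, Real.sin_sq]
  linarith
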